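/- arXiv:1406.0373 — 2 statements merged into one kernel-verified Lean document; each statement's English description precedes it below -/
import Mathlib

section
/- Fix integers k ≥ r ≥ 3, u ∈ ω(1) ∩ o(n), a constant μ > μ_c(k,r), and set m = ⌈μ·n^{r−1}/u(n)^{r−2}⌉. Consider the Markov chain for the lower bound driven by the random ensemble. Then for all sufficiently small ε > 0 there exists δ > 0 such that, for all sufficiently large n, Pr( C̲_{k−r+2}(⌊u(n)/(r−2)⌋) ≤ (1/((k−r+2)(k−r+1)) + ε)·n ) ≤ exp(−δn). -/
open Filter Finset Asymptotics

noncomputable section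

/-- Neighborhood `∂(a)` of constraint `a` in the bipartite graph given by `ω`. -/
def nbhd {n m k : ℕ} (ω : Fin m → (Fin k ↪ Fin n)) (a : Fin m) : Finset (Fin n) :=
  Finset.univ.image (ω a)

/-- `V` is a `d`-stopping set: every constraint meets `V` in `0` or at least `d` variables. -/
def IsStoppingSet {n m k : ℕ} (d : ℕ) (ω : Fin m → (Fin k ↪ Fin n))
    (V : Finset (Fin n)) : Prop :=
  ∀ a : Fin m, (nbhd ω a ∩ V).card = 0 ∨ d ≤ (nbhd ω a ∩ V).card

/-- Probability of an event under the uniform random bipartite-graph ensemble: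
each of the `m` constraints independently picks a uniformly random `k`-tuple of
distinct indices from `{1,…,n}` (an embedding `Fin k ↪ Fin n`). -/
def prG (n m k : ℕ) (P : (Fin m → (Fin k ↪ Fin n)) → Prop) : ℝ :=
  letI := Classical.decPred P
  ((Finset.univ.filter P).card : ℝ) / (Fintype.card (Fin m → (Fin k ↪ Fin n)) : ℝ)

/-- `u ∈ ω(1) ∩ o(n)`. -/
def UGood (u : ℕ → ℕ) : Prop :=
  Tendsto (fun n => (u n : ℝ)) atTop atTop ∧
    Tendsto (fun n => (u n : ℝ) / (n : ℝ)) atTop (nhds 0)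

/-- `μ_c(k,r) = binom(k,r)⁻¹ (r-2)^(r-2) / (r (r-1)^(r-1))`. -/
def muc (k r : ℕ) : ℝ :=
  ((k.choose r : ℝ))⁻¹ * (((r : ℝ) - 2) ^ (r - 2) / ((r : ℝ) * ((r : ℝ) - 1) ^ (r - 1)))

/-- `φ_{k,r}(μ,λ,τ) = μ (e^{(k-r+1)λ} - 1) binom(k,r-1) (1+τ)^{r-1} - λτ`. -/
def phiE (k r : ℕ) (μ lam τ : ℝ) : ℝ :=
  μ * (Real.exp (((k : ℝ) - (r : ℝ) + 1) * lam) - 1) * (k.choose (r - 1) : ℝ)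
      * (1 + τ) ^ (r - 1)
    - lam * τ

/-- Membership in the local marginal polytope LOCAL: each `B a` is a distribution on
`[q]^k`, each `b i` is a distribution on `[q]`, and the marginalization conditions hold. -/
def MemLOCAL {n m q k : ℕ} (nb : Fin m → (Fin k ↪ Fin n))
    (b : Fin n → Fin q → ℝ) (B : Fin m → (Fin k → Fin q) → ℝ) : Prop :=
  (∀ i x, 0 ≤ b i x) ∧ (∀ i, ∑ x, b i x = 1) ∧
  (∀ a z, 0 ≤ B a z) ∧ (∀ a, ∑ z, B a z = 1) ∧
  (∀ (a : Fin m) (j : Fin k) (x : Fin q),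
    b (nb a j) x = ∑ z : Fin k → Fin q, if z j = x then B a z else 0)

/-- A point of LOCAL is zero-optimal if each `B a` is supported on `f_a⁻¹(y_a)`. -/
def ZeroOptimal {m q k l : ℕ} (f : Fin m → (Fin k → Fin q) → (Fin l → Fin q))
    (y : Fin m → Fin l → Fin q) (B : Fin m → (Fin k → Fin q) → ℝ) : Prop :=
  ∀ a z, B a z ≠ 0 → f a z = y a

/-- Integral part of a point of LOCAL. -/
def integralPart {n q : ℕ} (b : Fin n → Fin q → ℝ) : Finset (Fin n) :=
  letI := Classical.decPred fun i : Fin n => ∃ x : Fin q, b i x = 1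
  Finset.univ.filter fun i : Fin n => ∃ x : Fin q, b i x = 1

/-- `f : [q]^k → [q]^l` is `w`-wise independent. -/
def WiseIndep (q k l w : ℕ) (f : (Fin k → Fin q) → (Fin l → Fin q)) : Prop :=
  ∀ T : Finset (Fin k), T.card ≤ w → ∀ xT : Fin k → Fin q, ∀ y : Fin l → Fin q,
    (Finset.univ.filter fun x : Fin k → Fin q =>
        (∀ i ∈ T, x i = xT i) ∧ f x = y).card
      = q ^ (k - T.card - l)

/-- Minimum Hamming distance of a code. -/
def minHammingDist {A : Type*} [DecidableEq A] {k : ℕ} (M : Finset (Fin k → A)) : ℕ :=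
  sInf {d | ∃ x ∈ M, ∃ y ∈ M, x ≠ y ∧ hammingDist x y = d}

/-- `M` is an MDS code of length `k` and dimension `r-1`. -/
def IsMDSCode (A : Type*) [Fintype A] [DecidableEq A] (k r : ℕ)
    (M : Finset (Fin k → A)) : Prop :=
  M.card = Fintype.card A ^ (r - 1) ∧ minHammingDist M = k - r + 2

/-- `f` has MDS inverse image of dimension `r-1`. -/
def HasMDSInv (q k r : ℕ) (f : (Fin k → Fin q) → (Fin (k - r + 1) → Fin q)) : Prop :=
  ∀ y : Fin (k - r + 1) → Fin q,
    IsMDSCode (Fin q) k r (Finset.univ.filter fun x => f x = y)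

instance {n m k : ℕ} (d : ℕ) (ω : Fin m → (Fin k ↪ Fin n)) :
    DecidablePred fun V : Finset (Fin n) => IsStoppingSet d ω V := fun V => by
  unfold IsStoppingSet; infer_instance
/-- The binomial point mass `binom(n,i) p^i (1-p)^(n-i)`. -/
def binomPMF (n : ℕ) (p : ℝ) (i : ℕ) : ℝ := (n.choose i : ℝ) * p ^ i * (1 - p) ^ (n - i)

/-- `C_j(0)`: the number of constraints whose neighborhood meets the unknown
variables `{u+1,…,n}` in exactly `j` variables. -/
def Cinit (n m k u : ℕ) (ω : Fin m → (Fin k ↪ Fin n)) (j : ℕ) : ℕ :=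
  (Finset.univ.filter fun a : Fin m =>
    ((nbhd ω a).filter fun i : Fin n => u ≤ (i : ℕ)).card = j).card

/-- Initial state of the peeling Markov chains: `E(0) = ∑_{j=1}^{k-r+1} j C_j(0)` and
`C_j(0)` for every `j`. -/
def initState (n m k r u : ℕ) (ω : Fin m → (Fin k ↪ Fin n)) : ℤ × (ℕ → ℕ) :=
  (∑ j ∈ Finset.Icc 1 (k - r + 1), (j : ℤ) * (Cinit n m k u ω j : ℤ),
   fun j => Cinit n m k u ω j)

/-- Extend a vector `R : Fin (r-1) → ℕ` (indexed by `j = k-r+2,…,k`) to all of `ℕ` by `0`. -/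
def Rext (k r : ℕ) (R : Fin (r - 1) → ℕ) (j : ℕ) : ℕ :=
  if h : k - r + 2 ≤ j ∧ j - (k - r + 2) < r - 1 then R ⟨j - (k - r + 2), h.2⟩ else 0

/-- One-step transition operator (at time `t`) of the Markov chain for the upper bound:
`(T_t g)(s) = E[g(next state) | state at time t = s]`, where independently
`R̄_j ~ Binom(C̄_j, j/N(t))` for `j = k-r+2,…,k`, `C̄_k` is unchanged,
`C̄_j ← C̄_j + R̄_{j+1}` for `j = k-r+2,…,k-1`, and `Ē ← Ē - 1 + (k-r+1) R̄_{k-r+2}`. -/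
def upperStep (k r n u t : ℕ) (g : ℤ × (ℕ → ℕ) → ℝ) (s : ℤ × (ℕ → ℕ)) : ℝ :=
  ∑' R : Fin (r - 1) → ℕ,
    (∏ i : Fin (r - 1),
      binomPMF (s.2 (k - r + 2 + (i : ℕ)))
        (((k - r + 2 + (i : ℕ) : ℕ) : ℝ) / ((n : ℝ) - (u : ℝ) - (t : ℝ))) (R i)) *
    g (s.1 - 1 + ((k - r + 1 : ℕ) : ℤ) * (Rext k r R (k - r + 2) : ℤ),
       fun j => if k - r + 2 ≤ j ∧ j < k then s.2 j + Rext k r R (j + 1) else s.2 j)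

/-- `upperIter k r n u s t g = T_s (T_{s+1} (⋯ (T_{s+t-1} g)))`, so that
`E[g(X_t)] = E[(upperIter k r n u 0 t g) (X_0)]` for the upper-bound chain. -/
def upperIter (k r n u : ℕ) : ℕ → ℕ → (ℤ × (ℕ → ℕ) → ℝ) → ℤ × (ℕ → ℕ) → ℝ
  | _, 0, g => g
  | s, t + 1, g => upperStep k r n u s (upperIter k r n u (s + 1) t g)

/-- `E[g(X̄(t))]` for the upper-bound Markov chain driven by the random ensemble. -/
def upperE (k r n u m t : ℕ) (g : ℤ × (ℕ → ℕ) → ℝ) : ℝ :=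
  (∑ ω : Fin m → (Fin k ↪ Fin n), upperIter k r n u 0 t g (initState n m k r u ω))
    / (Fintype.card (Fin m → (Fin k ↪ Fin n)) : ℝ)

/-- One-step transition operator (at time `t`) of the Markov chain for the lower bound:
independently `R̲_j ~ Binom(C̲_j, j/N(t))` for `j = k-r+2,…,k` and
`S̲ ~ Binom(E̲+t, 1/(N(t)-k+r))`; then `C̲_k ← C̲_k - R̲_k`,
`C̲_j ← C̲_j - R̲_j + R̲_{j+1}` for `j = k-r+2,…,k-1`, and
`E̲ ← E̲ - 1 - S̲ + (k-r+1) R̲_{k-r+2}`. -/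
def lowerStep (k r n u t : ℕ) (g : ℤ × (ℕ → ℕ) → ℝ) (s : ℤ × (ℕ → ℕ)) : ℝ :=
  ∑' RS : (Fin (r - 1) → ℕ) × ℕ,
    ((∏ i : Fin (r - 1),
        binomPMF (s.2 (k - r + 2 + (i : ℕ)))
          (((k - r + 2 + (i : ℕ) : ℕ) : ℝ) / ((n : ℝ) - (u : ℝ) - (t : ℝ))) (RS.1 i)) *
      binomPMF (s.1 + (t : ℤ)).toNat
        (1 / ((n : ℝ) - (u : ℝ) - (t : ℝ) - (k : ℝ) + (r : ℝ))) RS.2) *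
    g (s.1 - 1 - (RS.2 : ℤ) + ((k - r + 1 : ℕ) : ℤ) * (Rext k r RS.1 (k - r + 2) : ℤ),
       fun j => if k - r + 2 ≤ j ∧ j ≤ k
         then s.2 j - Rext k r RS.1 j + Rext k r RS.1 (j + 1) else s.2 j)

/-- `lowerIter k r n u s t g = T_s (T_{s+1} (⋯ (T_{s+t-1} g)))` for the lower-bound chain. -/
def lowerIter (k r n u : ℕ) : ℕ → ℕ → (ℤ × (ℕ → ℕ) → ℝ) → ℤ × (ℕ → ℕ) → ℝ
  | _, 0, g => g
  | s, t + 1, g => lowerStep k r n u s (lowerIter k r n u (s + 1) t g)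

/-- `E[g(X̲(t))]` for the lower-bound Markov chain driven by the random ensemble. -/
def lowerE (k r n u m t : ℕ) (g : ℤ × (ℕ → ℕ) → ℝ) : ℝ :=
  (∑ ω : Fin m → (Fin k ↪ Fin n), lowerIter k r n u 0 t g (initState n m k r u ω))
    / (Fintype.card (Fin m → (Fin k ↪ Fin n)) : ℝ)
/-- Backward transition probability of a single constraint to state `d` after `τ` steps. -/
def qv (M d τ j : ℕ) : ℝ :=
  if j < d then 0 else (M.choose d : ℝ) * (τ.choose (j - d) : ℝ) / ((M + τ).choose j : ℝ)

lemma qv_zero (M d j : ℕ) (hj : d ≤ j) (hM : d ≤ M) :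
    qv M d 0 j = if j = d then 1 else 0 := by
  unfold qv
  rw [if_neg (by omega)]
  split_ifs with h
  · subst h
    have : (M.choose j : ℝ) ≠ 0 := by exact_mod_cast (Nat.choose_pos hM).ne'
    simp [this]
  · have : Nat.choose 0 (j - d) = 0 := Nat.choose_eq_zero_of_lt (by omega)
    simp [this]

lemma qv_succ (M d τ j : ℕ) (hd : 1 ≤ d) (hj : d ≤ j) (hM : j ≤ M) :
    qv M d (τ + 1) j = (1 - (j : ℝ) / ((M + τ + 1 : ℕ) : ℝ)) * qv M d τ j
      + (j : ℝ) / ((M + τ + 1 : ℕ) : ℝ) * qv M d τ (j - 1) := by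
  obtain ⟨i, rfl⟩ : ∃ i, j = i + 1 := ⟨j - 1, by omega⟩
  have e1 : ((i + 1 : ℕ) : ℝ) * ((M + τ + 1).choose (i + 1) : ℝ)
      = ((M + τ + 1 : ℕ) : ℝ) * ((M + τ).choose i : ℝ) := by
    have := Nat.add_one_mul_choose_eq (M + τ) i
    rw [mul_comm]
    exact_mod_cast this.symm
  have e2 : ((M + τ + 1).choose (i + 1) : ℝ)
      = ((M + τ).choose i : ℝ) + ((M + τ).choose (i + 1) : ℝ) := by
    exact_mod_cast Nat.choose_succ_succ (M + τ) i
  have p0 : ((M + τ).choose i : ℝ) ≠ 0 := by exact_mod_cast (Nat.choose_pos (by omega)).ne'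
  have p1 : ((M + τ).choose (i + 1) : ℝ) ≠ 0 := by
    exact_mod_cast (Nat.choose_pos (by omega)).ne'
  have p2 : ((M + τ + 1).choose (i + 1) : ℝ) ≠ 0 := by
    exact_mod_cast (Nat.choose_pos (by omega)).ne'
  have p3 : ((M + τ + 1 : ℕ) : ℝ) ≠ 0 := by positivity
  have f1 : ((i + 1 : ℕ) : ℝ) / ((M + τ + 1 : ℕ) : ℝ)
      = ((M + τ).choose i : ℝ) / ((M + τ + 1).choose (i + 1) : ℝ) := by
    rw [div_eq_div_iff p3 p2, e1]; ring
  have f2 : 1 - ((i + 1 : ℕ) : ℝ) / ((M + τ + 1 : ℕ) : ℝ)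
      = ((M + τ).choose (i + 1) : ℝ) / ((M + τ + 1).choose (i + 1) : ℝ) := by
    rw [f1, eq_div_iff p2, sub_mul, div_mul_cancel₀ _ p2, e2]; ring
  rw [f2, f1]
  unfold qv
  rw [if_neg (by omega), if_neg (by omega)]
  rw [show M + (τ + 1) = M + τ + 1 by ring]
  simp only [Nat.add_sub_cancel]
  split_ifs with h
  · have : i + 1 - d = 0 := by omega
    simp only [this, Nat.choose_zero_right]
    field_simp
    ring
  · have : i + 1 - d = (i - d) + 1 := by omega
    rw [this, Nat.choose_succ_succ]
    push_cast
    field_simp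
    ring

lemma binom_sum (C : ℕ) (p y z : ℝ) :
    ∑ i ∈ Finset.range (C + 1), binomPMF C p i * (y ^ (C - i) * z ^ i)
      = ((1 - p) * y + p * z) ^ C := by
  rw [add_comm ((1 - p) * y), add_pow]
  refine Finset.sum_congr rfl fun i hi => ?_
  unfold binomPMF
  rw [mul_pow, mul_pow]; ring

lemma binom_one (C : ℕ) (p : ℝ) : ∑ i ∈ Finset.range (C + 1), binomPMF C p i = 1 := by
  have := binom_sum C p 1 1
  simpa using this

lemma binom_nonneg (C : ℕ) (p : ℝ) (h0 : 0 ≤ p) (h1 : p ≤ 1) (i : ℕ) : 0 ≤ binomPMF C p i := by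
  unfold binomPMF
  have : 0 ≤ 1 - p := by linarith
  positivity

lemma binom_out (C : ℕ) (p : ℝ) (i : ℕ) (h : C < i) : binomPMF C p i = 0 := by
  unfold binomPMF
  simp [Nat.choose_eq_zero_of_lt h]

/-- Multiplicative weight of a state. -/
def Wt (k r : ℕ) (y : ℕ → ℝ) (s : ℤ × (ℕ → ℕ)) : ℝ :=
  ∏ i : Fin (r - 1), y (k - r + 2 + (i : ℕ)) ^ s.2 (k - r + 2 + (i : ℕ))

lemma tsum_fin (q : ℕ) (C : Fin q → ℕ) (D : ℕ) (f : (Fin q → ℕ) × ℕ → ℝ)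
    (hf : ∀ RS : (Fin q → ℕ) × ℕ, ((∃ i, C i < RS.1 i) ∨ D < RS.2) → f RS = 0) :
    ∑' RS, f RS = ∑ RS ∈ (Fintype.piFinset fun i => Finset.range (C i + 1)) ×ˢ
      Finset.range (D + 1), f RS := by
  apply tsum_eq_sum
  intro RS h
  apply hf
  simp only [Finset.mem_product, Fintype.mem_piFinset, Finset.mem_range, not_and_or,
    not_forall] at h
  rcases h with ⟨i, hi⟩ | h
  · exact Or.inl ⟨i, by omega⟩
  · exact Or.inr (by omega)

lemma shift_prod (k r : ℕ) (hr : 3 ≤ r) (hrk : r ≤ k) (y : ℕ → ℝ) (hy : y (k - r + 1) = 1)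
    (C : ℕ → ℕ) (R : Fin (r - 1) → ℕ) :
    ∏ i : Fin (r - 1), y (k - r + 2 + (i : ℕ)) ^
      (if k - r + 2 ≤ k - r + 2 + (i : ℕ) ∧ k - r + 2 + (i : ℕ) ≤ k
         then C (k - r + 2 + (i : ℕ)) - Rext k r R (k - r + 2 + (i : ℕ))
          + Rext k r R (k - r + 2 + (i : ℕ) + 1) else C (k - r + 2 + (i : ℕ)))
    = ∏ i : Fin (r - 1), (y (k - r + 2 + (i : ℕ)) ^ (C (k - r + 2 + (i : ℕ)) - R i)
        * y (k - r + 2 + (i : ℕ) - 1) ^ R i) := by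
  have hR : ∀ i : Fin (r - 1), Rext k r R (k - r + 2 + (i : ℕ)) = R i := by
    intro i
    unfold Rext
    rw [dif_pos ⟨by omega, by have := i.2; omega⟩]
    congr 1
    ext
    simp
  have h1 : ∏ i : Fin (r - 1), y (k - r + 2 + (i : ℕ)) ^ Rext k r R (k - r + 2 + (i : ℕ) + 1)
      = ∏ i : Fin (r - 1), y (k - r + 2 + (i : ℕ) - 1) ^ R i := by
    simp_rw [← hR]
    rw [Fin.prod_univ_eq_prod_range
      (fun i => y (k - r + 2 + i) ^ Rext k r R (k - r + 2 + i + 1)) (r - 1),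
      Fin.prod_univ_eq_prod_range
      (fun i => y (k - r + 2 + i - 1) ^ Rext k r R (k - r + 2 + i)) (r - 1)]
    have hlast : Rext k r R (k - r + 2 + (r - 2) + 1) = 0 := by
      unfold Rext
      rw [dif_neg]
      omega
    rw [show r - 1 = (r - 2) + 1 by omega, Finset.prod_range_succ, Finset.prod_range_succ',
      hlast]
    simp only [Nat.add_zero, pow_zero, mul_one]
    rw [show k - r + 2 - 1 = k - r + 1 by omega, hy, one_pow, mul_one]
    refine Finset.prod_congr rfl fun i _ => ?_
    congr 1
  rw [Finset.prod_mul_distrib, ← h1, ← Finset.prod_mul_distrib]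
  refine Finset.prod_congr rfl fun i _ => ?_
  rw [if_pos ⟨by omega, by have := i.2; omega⟩, hR, pow_add]

lemma lowerStep_le (k r n u t : ℕ) (hr : 3 ≤ r) (hrk : r ≤ k) (hn : u + t + k + 1 ≤ n)
    (y y' : ℕ → ℝ) (hy : y (k - r + 1) = 1)
    (hyy : ∀ j, k - r + 2 ≤ j → j ≤ k → y' j = (1 - (j : ℝ) / ((n : ℝ) - u - t)) * y j
      + (j : ℝ) / ((n : ℝ) - u - t) * y (j - 1))
    (B : ℝ) (g : ℤ × (ℕ → ℕ) → ℝ) (hg : ∀ s, g s ≤ B * Wt k r y s) (s : ℤ × (ℕ → ℕ)) :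
    lowerStep k r n u t g s ≤ B * Wt k r y' s := by
  have hn' : (u : ℝ) + t + k + 1 ≤ n := by exact_mod_cast hn
  have hrk' : (r : ℝ) ≤ k := by exact_mod_cast hrk
  have hr0 : (3 : ℝ) ≤ r := by exact_mod_cast hr
  unfold lowerStep
  rw [tsum_fin (r - 1) (fun i => s.2 (k - r + 2 + (i : ℕ))) (s.1 + (t : ℤ)).toNat]
  swap
  · rintro ⟨R, S⟩ (⟨i, hi⟩ | h)
    · have : (∏ i : Fin (r - 1),
        binomPMF (s.2 (k - r + 2 + (i : ℕ)))
          (((k - r + 2 + (i : ℕ) : ℕ) : ℝ) / ((n : ℝ) - (u : ℝ) - (t : ℝ))) (R i)) = 0 :=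
        Finset.prod_eq_zero (Finset.mem_univ i) (binom_out _ _ _ hi)
      simp only [this, zero_mul]
    · simp only [binom_out _ _ _ h, mul_zero, zero_mul]
  have hpos : ∀ (R : Fin (r - 1) → ℕ) (S : ℕ), 0 ≤ (∏ i : Fin (r - 1),
        binomPMF (s.2 (k - r + 2 + (i : ℕ)))
          (((k - r + 2 + (i : ℕ) : ℕ) : ℝ) / ((n : ℝ) - (u : ℝ) - (t : ℝ))) (R i)) *
      binomPMF (s.1 + (t : ℤ)).toNat
        (1 / ((n : ℝ) - (u : ℝ) - (t : ℝ) - (k : ℝ) + (r : ℝ))) S := by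
    intro R S
    apply mul_nonneg
    · refine Finset.prod_nonneg fun i _ => binom_nonneg _ _ ?_ ?_ _
      · apply div_nonneg (by positivity); linarith [(Nat.cast_nonneg k : (0:ℝ) ≤ k)]
      · have : (((k - r + 2 + (i : ℕ) : ℕ)) : ℝ) ≤ k := by
          have := i.2
          exact_mod_cast (by omega : k - r + 2 + (i : ℕ) ≤ k)
        rw [div_le_one (by linarith [(Nat.cast_nonneg k : (0:ℝ) ≤ k)])]
        linarith
    · apply binom_nonneg
      · apply div_nonneg zero_le_one; linarith
      · rw [div_le_one (by linarith)]; linarith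
  refine (Finset.sum_le_sum fun RS _ => mul_le_mul_of_nonneg_left (hg _) (hpos RS.1 RS.2)).trans
    (le_of_eq ?_)
  rw [Finset.sum_product]
  unfold Wt
  simp only [shift_prod k r hr hrk y hy]
  have : ∀ R : Fin (r - 1) → ℕ, ∑ S ∈ Finset.range ((s.1 + (t : ℤ)).toNat + 1),
      ((∏ i : Fin (r - 1), binomPMF (s.2 (k - r + 2 + (i : ℕ)))
          (((k - r + 2 + (i : ℕ) : ℕ) : ℝ) / ((n : ℝ) - (u : ℝ) - (t : ℝ))) (R i)) *
        binomPMF (s.1 + (t : ℤ)).toNat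
        (1 / ((n : ℝ) - (u : ℝ) - (t : ℝ) - (k : ℝ) + (r : ℝ))) S) *
       (B * ∏ i : Fin (r - 1), (y (k - r + 2 + (i : ℕ)) ^ (s.2 (k - r + 2 + (i : ℕ)) - R i)
        * y (k - r + 2 + (i : ℕ) - 1) ^ R i))
      = B * ∏ i : Fin (r - 1), (binomPMF (s.2 (k - r + 2 + (i : ℕ)))
          (((k - r + 2 + (i : ℕ) : ℕ) : ℝ) / ((n : ℝ) - (u : ℝ) - (t : ℝ))) (R i) *
          (y (k - r + 2 + (i : ℕ)) ^ (s.2 (k - r + 2 + (i : ℕ)) - R i)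
        * y (k - r + 2 + (i : ℕ) - 1) ^ R i)) := by
    intro R
    rw [← Finset.sum_mul, ← Finset.mul_sum, binom_one, mul_one, mul_left_comm,
      ← Finset.prod_mul_distrib]
  simp only [this]
  rw [← Finset.mul_sum]
  congr 1
  rw [← Finset.prod_univ_sum (fun i : Fin (r - 1) => Finset.range (s.2 (k - r + 2 + (i : ℕ)) + 1))
    (fun i x => binomPMF (s.2 (k - r + 2 + (i : ℕ)))
          (((k - r + 2 + (i : ℕ) : ℕ) : ℝ) / ((n : ℝ) - (u : ℝ) - (t : ℝ))) x *
          (y (k - r + 2 + (i : ℕ)) ^ (s.2 (k - r + 2 + (i : ℕ)) - x)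
        * y (k - r + 2 + (i : ℕ) - 1) ^ x))]
  refine Finset.prod_congr rfl fun i _ => ?_
  rw [binom_sum, hyy _ (by omega) (by have := i.2; omega)]

lemma lowerIter_le (k r n u M : ℕ) (hr : 3 ≤ r) (hrk : r ≤ k) (hM : k + 1 ≤ M) (a : ℝ)
    (B : ℝ) (g : ℤ × (ℕ → ℕ) → ℝ)
    (hg : ∀ s, g s ≤ B * Wt k r (fun j => 1 - a * qv M (k - r + 2) 0 j) s) :
    ∀ (τ t : ℕ), n = u + t + τ + M → ∀ s, lowerIter k r n u t τ g s
      ≤ B * Wt k r (fun j => 1 - a * qv M (k - r + 2) τ j) s := by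
  intro τ
  induction τ with
  | zero => intro t _ s; exact hg s
  | succ τ ih =>
    intro t ht s
    unfold lowerIter
    refine lowerStep_le k r n u t hr hrk (by omega) (fun j => 1 - a * qv M (k - r + 2) τ j) _ ?_ ?_
      B _ (ih (t + 1) (by omega)) s
    · simp [qv]
    · intro j hj hjk
      have e : (n : ℝ) - u - t = ((M + τ + 1 : ℕ) : ℝ) := by
        rw [ht]; push_cast; ring
      rw [e]
      rw [qv_succ M (k - r + 2) τ j (by omega) hj (by omega)]
      ring

/-- State of a single constraint. -/
def est {k n : ℕ} (u : ℕ) (e : Fin k ↪ Fin n) : ℕ :=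
  ((Finset.univ.image e).filter fun i : Fin n => u ≤ (i : ℕ)).card

lemma est_le {k n : ℕ} (u : ℕ) (e : Fin k ↪ Fin n) : est u e ≤ k := by
  unfold est
  refine (Finset.card_filter_le _ _).trans (Finset.card_image_le.trans ?_)
  simp

lemma card_fiber (k n : ℕ) (s : Finset (Fin n)) (hs : s.card = k) :
    ((Finset.univ : Finset (Fin k ↪ Fin n)).filter fun e : Fin k ↪ Fin n => Finset.univ.image e = s).card
      = k.factorial := by
  have h1 : Fintype.card (Fin k ↪ s) = k.factorial := by
    rw [Fintype.card_embedding_eq]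
    simp [hs, Nat.descFactorial_self]
  rw [← h1, ← Finset.card_univ]
  symm
  refine Finset.card_bij (fun (e : Fin k ↪ s) _ => e.trans (Function.Embedding.subtype _)) ?_ ?_ ?_
  · intro e _
    simp only [Finset.mem_filter, Finset.mem_univ, true_and]
    apply Finset.eq_of_subset_of_card_le
    · intro x hx
      simp only [Finset.mem_image, Finset.mem_univ, true_and] at hx
      obtain ⟨i, rfl⟩ := hx
      exact (e i).2
    · rw [Finset.card_image_of_injective _ (Function.Embedding.injective _)]
      simp [hs]
  · intro e _ e' _ h
    ext i
    have := DFunLike.congr_fun h i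
    simpa using congrArg (fun x : Fin n => (x : ℕ)) this
  · intro e he
    simp only [Finset.mem_filter, Finset.mem_univ, true_and] at he
    refine ⟨⟨fun i => ⟨e i, by rw [← he]; exact Finset.mem_image_of_mem _ (Finset.mem_univ _)⟩,
      fun i i' h => e.injective (by simpa using h)⟩, Finset.mem_univ _, ?_⟩
    ext i
    rfl

lemma card_subsets (n k u j : ℕ) (hu : u ≤ n) (hj : j ≤ k) :
    ((Finset.powersetCard k (Finset.univ : Finset (Fin n))).filter
      fun s : Finset (Fin n) => (s.filter fun i : Fin n => u ≤ (i : ℕ)).card = j).card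
      = (n - u).choose j * u.choose (k - j) := by
  have c1 : ((Finset.univ : Finset (Fin n)).filter fun i : Fin n => ¬ u ≤ (i : ℕ)).card = u := by
    simp only [not_le]
    rw [Fin.card_filter_val_lt]
    omega
  have c2 : ((Finset.univ : Finset (Fin n)).filter fun i : Fin n => u ≤ (i : ℕ)).card = n - u := by
    have := Finset.card_filter_add_card_filter_not (s := (Finset.univ : Finset (Fin n)))
      (fun i : Fin n => u ≤ (i : ℕ))
    rw [c1] at this
    simp only [Finset.card_univ, Fintype.card_fin] at this
    omega
  have : (n - u).choose j * u.choose (k - j) =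
    (Finset.powersetCard j ((Finset.univ : Finset (Fin n)).filter fun i : Fin n => u ≤ (i : ℕ)) ×ˢ
     Finset.powersetCard (k - j)
      ((Finset.univ : Finset (Fin n)).filter fun i : Fin n => ¬ u ≤ (i : ℕ))).card := by
    rw [Finset.card_product, Finset.card_powersetCard, Finset.card_powersetCard, c1, c2]
  rw [this]
  refine Finset.card_nbij' (fun s : Finset (Fin n) => (s.filter fun i : Fin n => u ≤ (i : ℕ),
      s.filter fun i : Fin n => ¬ u ≤ (i : ℕ))) (fun p => p.1 ∪ p.2) ?_ ?_ ?_ ?_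
  · intro s hs
    simp only [Finset.coe_filter, Finset.mem_powersetCard, Set.mem_ofPred_eq] at hs
    have := Finset.card_filter_add_card_filter_not (s := s) (fun i : Fin n => u ≤ (i : ℕ))
    simp only [Finset.coe_product, Set.mem_prod, Finset.mem_coe, Finset.mem_powersetCard]
    refine ⟨⟨Finset.filter_subset_filter _ hs.1.1, hs.2⟩,
      Finset.filter_subset_filter _ hs.1.1, by omega⟩
  · intro p hp
    simp only [Finset.coe_product, Set.mem_prod, Finset.mem_coe, Finset.mem_powersetCard] at hp
    obtain ⟨⟨h1, h2⟩, h3, h4⟩ := hp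
    have hd : Disjoint p.1 p.2 :=
      Finset.disjoint_of_subset_left h1 (Finset.disjoint_of_subset_right h3
        (Finset.disjoint_filter_filter_not _ _ _))
    simp only [Finset.coe_filter, Finset.mem_powersetCard, Set.mem_ofPred_eq]
    refine ⟨⟨Finset.subset_univ _, ?_⟩, ?_⟩
    · rw [Finset.card_union_of_disjoint hd]; omega
    · rw [Finset.filter_union, Finset.filter_true_of_mem, Finset.filter_false_of_mem]
      · simpa using h2
      · intro x hx; exact (Finset.mem_filter.1 (h3 hx)).2
      · intro x hx; exact (Finset.mem_filter.1 (h1 hx)).2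
  · intro s _
    exact Finset.filter_union_filter_not_eq _ _
  · intro p hp
    simp only [Finset.coe_product, Set.mem_prod, Finset.mem_coe, Finset.mem_powersetCard] at hp
    obtain ⟨⟨h1, h2⟩, h3, h4⟩ := hp
    have a1 : ∀ x ∈ p.1, u ≤ (x : ℕ) := fun x hx => (Finset.mem_filter.1 (h1 hx)).2
    have a2 : ∀ x ∈ p.2, ¬ u ≤ (x : ℕ) := fun x hx => (Finset.mem_filter.1 (h3 hx)).2
    ext x
    · simp only [Finset.mem_filter, Finset.mem_union]
      constructor
      · rintro ⟨h | h, h'⟩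
        · exact h
        · exact absurd h' (a2 x h)
      · intro h; exact ⟨Or.inl h, a1 x h⟩
    · simp only [Finset.mem_filter, Finset.mem_union]
      constructor
      · rintro ⟨h | h, h'⟩
        · exact absurd (a1 x h) h'
        · exact h
      · intro h; exact ⟨Or.inr h, a2 x h⟩

lemma card_est (n k u j : ℕ) (hu : u ≤ n) (hj : j ≤ k) :
    ((Finset.univ : Finset (Fin k ↪ Fin n)).filter fun e => est u e = j).card
      = ((n - u).choose j * u.choose (k - j)) * k.factorial := by
  rw [← card_subsets n k u j hu hj]
  rw [Finset.card_eq_sum_card_fiberwise (f := fun e : Fin k ↪ Fin n => Finset.univ.image e)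
    (t := (Finset.powersetCard k (Finset.univ : Finset (Fin n))).filter
      fun s : Finset (Fin n) => (s.filter fun i : Fin n => u ≤ (i : ℕ)).card = j)]
  · rw [Finset.sum_const_nat]
    intro s hs
    simp only [Finset.mem_filter, Finset.mem_powersetCard] at hs
    rw [← card_fiber k n s hs.1.2, Finset.filter_filter]
    congr 1
    ext e
    simp only [Finset.mem_filter, Finset.mem_univ, true_and, and_iff_right_iff_imp]
    intro h
    unfold est
    rw [h]; exact hs.2
  · intro e he
    simp only [Finset.coe_filter, Finset.mem_univ, true_and, Set.mem_ofPred_eq] at he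
    simp only [Finset.coe_filter, Finset.mem_powersetCard, Set.mem_ofPred_eq]
    refine ⟨⟨Finset.subset_univ _, ?_⟩, he⟩
    rw [Finset.card_image_of_injective _ e.injective]; simp

lemma sum_qv (n k u M d τ : ℕ) (hn : n = u + τ + M) (hdk : d ≤ k) (hM : k ≤ M) :
    ∑ e : Fin k ↪ Fin n, qv M d τ (est u e)
      = (k.factorial : ℝ) * ((M.choose d : ℝ) * ((u + τ).choose (k - d) : ℝ)) := by
  have h1 : ∑ e : Fin k ↪ Fin n, qv M d τ (est u e)
      = ∑ j ∈ Finset.range (k + 1),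
        (((Finset.univ : Finset (Fin k ↪ Fin n)).filter fun e => est u e = j).card : ℝ)
          * qv M d τ j := by
    rw [← Finset.sum_fiberwise_of_maps_to (t := Finset.range (k + 1)) (g := fun e => est u e)]
    · refine Finset.sum_congr rfl fun j _ => ?_
      rw [← nsmul_eq_mul, ← Finset.sum_const]
      refine Finset.sum_congr rfl fun e he => ?_
      rw [(Finset.mem_filter.1 he).2]
    · intro e _
      have := est_le u e
      simp only [Finset.mem_range]; omega
  rw [h1]
  obtain ⟨w, rfl⟩ := Nat.exists_eq_add_of_le hdk
  rw [show d + w + 1 = d + (w + 1) by ring, Finset.sum_range_add]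
  have h2 : ∑ j ∈ Finset.range d,
        (((Finset.univ : Finset (Fin (d + w) ↪ Fin n)).filter fun e => est u e = j).card : ℝ)
          * qv M d τ j = 0 := by
    refine Finset.sum_eq_zero fun j hj => ?_
    unfold qv
    rw [if_pos (Finset.mem_range.1 hj), mul_zero]
  rw [h2, zero_add, Nat.add_sub_cancel_left, Nat.add_comm u τ, Nat.add_choose_eq,
    Finset.Nat.sum_antidiagonal_eq_sum_range_succ_mk]
  push_cast
  rw [Finset.mul_sum, Finset.mul_sum]
  refine Finset.sum_congr rfl fun i hi => ?_
  have hi' : i ≤ w := by have := Finset.mem_range.1 hi; omega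
  rw [card_est n (d + w) u (d + i) (by omega) (by omega)]
  unfold qv
  rw [if_neg (by omega), Nat.add_sub_cancel_left, show d + w - (d + i) = w - i by omega,
    show n - u = M + τ by omega]
  have : ((M + τ).choose (d + i) : ℝ) ≠ 0 := by
    exact_mod_cast (Nat.choose_pos (by omega)).ne'
  push_cast
  field_simp

lemma Wt_init (n m k r u : ℕ) (hr : 3 ≤ r) (hrk : r ≤ k) (y : ℕ → ℝ)
    (hy : ∀ j, j < k - r + 2 → y j = 1) (ω : Fin m → (Fin k ↪ Fin n)) :
    Wt k r y (initState n m k r u ω) = ∏ a : Fin m, y (est u (ω a)) := by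
  have h1 : ∏ a : Fin m, y (est u (ω a)) = ∏ j ∈ Finset.range (k + 1),
      y j ^ (Finset.univ.filter fun a : Fin m => est u (ω a) = j).card := by
    rw [← Finset.prod_fiberwise_of_maps_to (t := Finset.range (k + 1))
      (g := fun a => est u (ω a))]
    · refine Finset.prod_congr rfl fun j _ => ?_
      rw [← Finset.prod_const]
      refine Finset.prod_congr rfl fun e he => ?_
      rw [(Finset.mem_filter.1 he).2]
    · intro e _
      have := est_le u (ω e)
      simp only [Finset.mem_range]; omega
  rw [h1, show k + 1 = (k - r + 2) + (r - 1) by omega, Finset.prod_range_add,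
    Finset.prod_eq_one (s := Finset.range (k - r + 2)), one_mul]
  · unfold Wt
    rw [Fin.prod_univ_eq_prod_range (fun i => y (k - r + 2 + i) ^
      (initState n m k r u ω).2 (k - r + 2 + i)) (r - 1)]
    rfl
  · intro j hj
    rw [hy j (Finset.mem_range.1 hj), one_pow]

lemma lowerE_le (k r n u m τ M : ℕ) (hr : 3 ≤ r) (hrk : r ≤ k) (hM : k + 1 ≤ M)
    (hn : n = u + τ + M) (lam c : ℝ) (hl : 0 ≤ lam) (g : ℤ × (ℕ → ℕ) → ℝ)
    (hg : ∀ s, g s ≤ Real.exp (lam * c) * Real.exp (-lam) ^ (s.2 (k - r + 2))) :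
    lowerE k r n u m τ g ≤ Real.exp (lam * c - (1 - Real.exp (-lam)) *
      ((M.choose (k - r + 2) : ℝ) * ((u + τ).choose (r - 2) : ℝ) / (n.choose k : ℝ)) * m) := by
  set a := 1 - Real.exp (-lam) with ha
  have ha0 : 0 ≤ a := by
    have : Real.exp (-lam) ≤ 1 := Real.exp_le_one_iff.2 (by linarith)
    linarith
  have ha1 : a ≤ 1 := by have := Real.exp_pos (-lam); linarith
  have hW : ∀ s, g s ≤ Real.exp (lam * c) *
      Wt k r (fun j => 1 - a * qv M (k - r + 2) 0 j) s := by
    intro s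
    refine (hg s).trans (le_of_eq ?_)
    congr 1
    unfold Wt
    rw [Finset.prod_eq_single (⟨0, by omega⟩ : Fin (r - 1))]
    · simp only [Nat.add_zero]
      rw [qv_zero _ _ _ le_rfl (by omega), if_pos rfl, ha]
      congr 1; ring
    · intro i _ hi
      have hi0 : (i : ℕ) ≠ 0 := fun h => hi (Fin.ext h)
      simp only
      rw [qv_zero _ _ _ (by omega) (by omega), if_neg (by omega)]
      simp
    · intro h; exact absurd (Finset.mem_univ _) h
  have hit := lowerIter_le k r n u M hr hrk hM a _ g hW τ 0 (by omega)
  have hcard : (Fintype.card (Fin k ↪ Fin n) : ℝ) = (k.factorial : ℝ) * (n.choose k : ℝ) := by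
    rw [Fintype.card_embedding_eq]
    simp only [Fintype.card_fin]
    rw [Nat.descFactorial_eq_factorial_mul_choose]
    push_cast; ring
  have hch : (0 : ℝ) < n.choose k := by exact_mod_cast Nat.choose_pos (by omega)
  have hfac : (0 : ℝ) < k.factorial := by exact_mod_cast Nat.factorial_pos k
  have hcp : (0 : ℝ) < Fintype.card (Fin k ↪ Fin n) := by rw [hcard]; positivity
  set p : ℝ := (M.choose (k - r + 2) : ℝ) * ((u + τ).choose (r - 2) : ℝ) / (n.choose k : ℝ) with hp
  have hsum : ∑ e : Fin k ↪ Fin n, (1 - a * qv M (k - r + 2) τ (est u e))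
      = Fintype.card (Fin k ↪ Fin n) * (1 - a * p) := by
    rw [Finset.sum_sub_distrib, ← Finset.mul_sum,
      sum_qv n k u M (k - r + 2) τ hn (by omega) (by omega), hcard, hp,
      show k - (k - r + 2) = r - 2 by omega]
    simp only [Finset.sum_const, Finset.card_univ, nsmul_eq_mul, mul_one, hcard]
    field_simp
  have hq0 : ∀ e : Fin k ↪ Fin n, 0 ≤ 1 - a * qv M (k - r + 2) τ (est u e) := by
    intro e
    have h1 : qv M (k - r + 2) τ (est u e) ≤ 1 := by
      unfold qv
      split_ifs with h
      · norm_num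
      · have hle := est_le u e
        apply div_le_one_of_le₀ _ (by positivity)
        have := Nat.add_choose_eq M τ (est u e)
        have h2 : M.choose (k - r + 2) * τ.choose (est u e - (k - r + 2))
            ≤ (M + τ).choose (est u e) := by
          rw [this]
          exact Finset.single_le_sum
            (f := fun ij : ℕ × ℕ => M.choose ij.1 * τ.choose ij.2) (fun _ _ => Nat.zero_le _)
            (Finset.HasAntidiagonal.mem_antidiagonal.2 (by
              show k - r + 2 + (est u e - (k - r + 2)) = est u e; omega) :
              (k - r + 2, est u e - (k - r + 2)) ∈
                Finset.HasAntidiagonal.antidiagonal (est u e))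
        exact_mod_cast h2
    have h0 : 0 ≤ qv M (k - r + 2) τ (est u e) := by
      unfold qv
      split_ifs
      · exact le_rfl
      · positivity
    nlinarith
  have hbase : 0 ≤ 1 - a * p := by
    have : 0 ≤ (Fintype.card (Fin k ↪ Fin n) : ℝ) * (1 - a * p) := by
      rw [← hsum]; exact Finset.sum_nonneg fun e _ => hq0 e
    exact nonneg_of_mul_nonneg_right this hcp
  unfold lowerE
  have hS : ∑ ω : Fin m → (Fin k ↪ Fin n), lowerIter k r n u 0 τ g (initState n m k r u ω)
      ≤ Real.exp (lam * c) * (Fintype.card (Fin k ↪ Fin n) * (1 - a * p)) ^ m := by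
    refine (Finset.sum_le_sum fun ω _ => hit _).trans (le_of_eq ?_)
    rw [← Finset.mul_sum]
    congr 1
    rw [← hsum]
    have e1 : ∀ ω : Fin m → (Fin k ↪ Fin n),
        Wt k r (fun j => 1 - a * qv M (k - r + 2) τ j) (initState n m k r u ω)
         = ∏ i : Fin m, (1 - a * qv M (k - r + 2) τ (est u (ω i))) := by
      intro ω
      rw [Wt_init n m k r u hr hrk _ _ ω]
      intro j hj
      simp [qv, hj]
    simp only [e1]
    rw [Fintype.sum_pow]
  rw [div_le_iff₀ (by
    rw [Fintype.card_fun]; push_cast; positivity)]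
  refine hS.trans ?_
  rw [Fintype.card_fun, Fintype.card_fin]
  push_cast
  rw [mul_pow, sub_eq_add_neg (lam * c), Real.exp_add, mul_comm ((Fintype.card (Fin k ↪ Fin n) : ℝ) ^ m),
    ← mul_assoc]
  refine mul_le_mul_of_nonneg_right ?_ (by positivity)
  refine mul_le_mul_of_nonneg_left ?_ (Real.exp_pos _).le
  calc (1 - a * p) ^ m ≤ (Real.exp (-(a * p))) ^ m := by
        apply pow_le_pow_left₀ hbase
        have := Real.add_one_le_exp (-(a * p))
        linarith
    _ = _ := by rw [← Real.exp_nat_mul]; congr 1; ring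

lemma choose_tendsto (f : ℕ → ℕ) (g : ℕ → ℝ) (a : ℝ) (hg : Tendsto g atTop atTop)
    (hf : Tendsto (fun n => (f n : ℝ) / g n) atTop (nhds a)) (i : ℕ) :
    Tendsto (fun n => ((f n).choose i : ℝ) / g n ^ i) atTop (nhds (a ^ i / (i.factorial : ℝ))) := by
  induction i with
  | zero => simp
  | succ i ih =>
    have h1 : Tendsto (fun n => (i : ℝ) / g n) atTop (nhds 0) :=
      tendsto_const_nhds.div_atTop hg
    have h2 := (ih.mul (hf.sub h1)).div_const ((i : ℝ) + 1)
    have e : a ^ i / (i.factorial : ℝ) * (a - 0) / ((i : ℝ) + 1)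
        = a ^ (i + 1) / ((i + 1).factorial : ℝ) := by
      rw [Nat.factorial_succ]
      have : (i.factorial : ℝ) ≠ 0 := by exact_mod_cast Nat.factorial_ne_zero i
      push_cast
      field_simp
      ring
    rw [e] at h2
    refine h2.congr' ?_
    filter_upwards [hg.eventually_gt_atTop 0] with n hn
    have h3 : ((f n).choose (i + 1) : ℝ) * ((i : ℝ) + 1)
        = ((f n).choose i : ℝ) * ((f n : ℝ) - i) := by
      by_cases h : i ≤ f n
      · have := Nat.choose_succ_right_eq (f n) i
        rw [← Nat.cast_sub h]
        exact_mod_cast this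
      · rw [Nat.choose_eq_zero_of_lt (by omega : f n < i),
          Nat.choose_eq_zero_of_lt (by omega : f n < i + 1)]
        simp
    have h4 : (i : ℝ) + 1 ≠ 0 := by positivity
    have h5 : ((f n).choose (i + 1) : ℝ)
        = ((f n).choose i : ℝ) * ((f n : ℝ) - i) / ((i : ℝ) + 1) := by
      rw [eq_div_iff h4, h3]
    rw [h5]
    field_simp
    ring

lemma muc_mul (k r : ℕ) (hr : 3 ≤ r) (hrk : r ≤ k) :
    muc k r * ((k.choose (r - 2) : ℝ) * (1 + 1 / ((r - 2 : ℕ) : ℝ)) ^ (r - 2))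
      = 1 / (((k : ℝ) - r + 2) * ((k : ℝ) - r + 1)) := by
  obtain ⟨w, rfl⟩ : ∃ w, r = w + 2 := ⟨r - 2, by omega⟩
  obtain ⟨e, rfl⟩ : ∃ e, k = w + 2 + e := ⟨k - (w + 2), by omega⟩
  have hw : (0 : ℝ) < w := by exact_mod_cast (by omega : 0 < w)
  have a1 := Nat.choose_succ_right_eq (w + 2 + e) w
  have a2 := Nat.choose_succ_right_eq (w + 2 + e) (w + 1)
  rw [show w + 2 + e - w = e + 2 by omega] at a1
  rw [show w + 2 + e - (w + 1) = e + 1 by omega] at a2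
  have b1 : ((w + 2 + e).choose (w + 1) : ℝ) * ((w : ℝ) + 1)
    = ((w + 2 + e).choose w : ℝ) * ((e : ℝ) + 2) := by exact_mod_cast a1
  have b2 : ((w + 2 + e).choose (w + 2) : ℝ) * ((w : ℝ) + 2)
    = ((w + 2 + e).choose (w + 1) : ℝ) * ((e : ℝ) + 1) := by
    have : ((w + 2 + e).choose (w + 1 + 1) : ℝ) * ((w : ℝ) + 1 + 1)
      = ((w + 2 + e).choose (w + 1) : ℝ) * ((e : ℝ) + 1) := by exact_mod_cast a2
    rw [show (w : ℝ) + 2 = w + 1 + 1 by ring]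
    exact this
  have c2 : (0 : ℝ) < ((w + 2 + e).choose (w + 2) : ℝ) := by
    exact_mod_cast Nat.choose_pos (by omega)
  unfold muc
  simp only [Nat.add_sub_cancel]
  rw [show w + 2 - 1 = w + 1 by omega]
  push_cast
  rw [show (w : ℝ) + 2 - 2 = w by ring, show (w : ℝ) + 2 - 1 = w + 1 by ring,
    show (w : ℝ) + 2 + e - (w + 2) + 2 = e + 2 by ring,
    show (w : ℝ) + 2 + e - (w + 2) + 1 = e + 1 by ring,
    show (1 : ℝ) + 1 / w = (w + 1) / w by field_simp, div_pow, pow_succ]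
  have hk : ((w + 2 + e).choose w : ℝ) * (((e : ℝ) + 2) * ((e : ℝ) + 1))
      = ((w + 2 + e).choose (w + 2) : ℝ) * (((w : ℝ) + 2) * ((w : ℝ) + 1)) := by
    linear_combination (-((e : ℝ) + 1)) * b1 - ((w : ℝ) + 1) * b2
  have hw1 : ((w : ℝ) + 1) ^ w ≠ 0 := by positivity
  have hw2 : (w : ℝ) ^ w ≠ 0 := by positivity
  field_simp
  linear_combination hk

set_option maxHeartbeats 2000000

/-- for the lower-bound Markov chain with `μ > μ_c(k,r)` and
`m = ⌈μ n^{r-1}/u(n)^{r-2}⌉`, for all sufficiently small `ε > 0` there is `δ > 0` with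
`Pr(C̲_{k-r+2}(⌊u(n)/(r-2)⌋) ≤ (1/((k-r+2)(k-r+1)) + ε) n) ≤ exp(-δn)` for large `n`. -/
theorem stmt15 (k r : ℕ) (hr : 3 ≤ r) (hrk : r ≤ k)
    (u : ℕ → ℕ) (hu : UGood u)
    (μ : ℝ) (hμ : muc k r < μ)
    (m : ℕ → ℕ) (hm : ∀ n, m n = ⌈μ * (n : ℝ) ^ (r - 1) / (u n : ℝ) ^ (r - 2)⌉₊) :
    ∃ ε₀ > (0 : ℝ), ∀ ε ∈ Set.Ioo (0 : ℝ) ε₀, ∃ δ > (0 : ℝ), ∀ᶠ n in atTop,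
      lowerE k r n (u n) (m n) (u n / (r - 2))
          (fun st : ℤ × (ℕ → ℕ) =>
            if (st.2 (k - r + 2) : ℝ)
                ≤ (1 / (((k : ℝ) - r + 2) * ((k : ℝ) - r + 1)) + ε) * n then 1 else 0)
        ≤ Real.exp (-δ * n) := by
  have hw : 1 ≤ r - 2 := by omega
  have hwR : (0 : ℝ) < ((r - 2 : ℕ) : ℝ) := by exact_mod_cast (by omega : 0 < r - 2)
  have hrR : (3 : ℝ) ≤ r := by exact_mod_cast hr
  have hrkR : (r : ℝ) ≤ k := by exact_mod_cast hrk
  obtain ⟨hu1, hu2⟩ := hu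
  set c0 : ℝ := 1 / (((k : ℝ) - r + 2) * ((k : ℝ) - r + 1)) with hc0
  have hc0pos : 0 < c0 := by
    have h1 : 0 < (k : ℝ) - r + 2 := by linarith
    have h2 : 0 < (k : ℝ) - r + 1 := by linarith
    positivity
  set K : ℝ := (k.choose (r - 2) : ℝ) * (1 + 1 / ((r - 2 : ℕ) : ℝ)) ^ (r - 2) with hK
  have hKpos : 0 < K := by
    have : (0 : ℝ) < (k.choose (r - 2) : ℝ) := by exact_mod_cast Nat.choose_pos (by omega)
    positivity
  have hmul : muc k r * K = c0 := muc_mul k r hr hrk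
  have hcs : c0 < μ * K := by rw [← hmul]; exact mul_lt_mul_of_pos_right hμ hKpos
  have hμ0 : 0 < μ := by
    by_contra h
    push Not at h
    nlinarith
  refine ⟨μ * K - c0, by linarith, ?_⟩
  rintro ε ⟨hε0, hε1⟩
  set c : ℝ := c0 + ε with hc
  have hcpos : 0 < c := by linarith
  set c' : ℝ := (c + μ * K) / 2 with hc'
  have hcc' : c < c' := by linarith
  have hc's : c' < μ * K := by linarith
  set lam : ℝ := (c' - c) / (2 * c) with hlam
  have hlpos : 0 < lam := div_pos (by linarith) (by linarith)
  have hlc : lam * c = (c' - c) / 2 := by rw [hlam]; field_simp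
  clear_value lam
  have hexp : lam / (1 + lam) ≤ 1 - Real.exp (-lam) := by
    have h1 : Real.exp (-lam) ≤ (1 + lam)⁻¹ := by
      rw [Real.exp_neg]
      apply inv_anti₀ (by linarith)
      have := Real.add_one_le_exp lam
      linarith
    have h2 : lam / (1 + lam) = 1 - (1 + lam)⁻¹ := by field_simp; ring
    linarith
  have hδ : 0 < (1 - Real.exp (-lam)) * c' - lam * c := by
    have h1 : lam * c < lam / (1 + lam) * c' := by
      rw [div_mul_eq_mul_div, lt_div_iff₀ (by linarith)]
      have : c * (1 + lam) < c' := by linarith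
      nlinarith
    have h2 : lam / (1 + lam) * c' ≤ (1 - Real.exp (-lam)) * c' :=
      mul_le_mul_of_nonneg_right hexp (by linarith)
    linarith
  refine ⟨(1 - Real.exp (-lam)) * c' - lam * c, hδ, ?_⟩
  have hnat : Tendsto (fun n : ℕ => (n : ℝ)) atTop atTop := tendsto_natCast_atTop_atTop
  -- the number of steps
  have hT : Tendsto (fun n => ((u n / (r - 2) : ℕ) : ℝ) / (u n : ℝ)) atTop
      (nhds (1 / ((r - 2 : ℕ) : ℝ))) := by
    have h := (tendsto_nat_floor_mul_div_atTop (R := ℝ) (a := 1 / ((r - 2 : ℕ) : ℝ))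
      (by positivity)).comp hu1
    refine h.congr fun n => ?_
    simp only [Function.comp]
    rw [one_div_mul_eq_div, Nat.floor_div_eq_div]
  have hupos : ∀ᶠ n in atTop, (0 : ℝ) < u n := hu1.eventually_gt_atTop 0
  have hnpos : ∀ᶠ n : ℕ in atTop, (0 : ℝ) < n := hnat.eventually_gt_atTop 0
  have hUT : Tendsto (fun n => ((u n + u n / (r - 2) : ℕ) : ℝ) / (u n : ℝ)) atTop
      (nhds (1 + 1 / ((r - 2 : ℕ) : ℝ))) := by
    refine (hT.const_add 1).congr' ?_
    filter_upwards [hupos] with n hn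
    push_cast
    rw [add_div, div_self hn.ne']
  have hUTn : Tendsto (fun n => ((u n + u n / (r - 2) : ℕ) : ℝ) / (n : ℝ)) atTop (nhds 0) := by
    have h := hUT.mul hu2
    rw [mul_zero] at h
    refine h.congr' ?_
    filter_upwards [hupos] with n hn
    field_simp
  have hsmall : ∀ᶠ n : ℕ in atTop, u n + u n / (r - 2) + (k + 1) ≤ n := by
    have h1 := hUTn.eventually (gt_mem_nhds (by norm_num : (0 : ℝ) < 1 / 2))
    filter_upwards [h1, hnpos, hnat.eventually_ge_atTop (2 * ((k : ℝ) + 1))] with n h1 h2 h3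
    rw [div_lt_iff₀ h2] at h1
    have : ((u n + u n / (r - 2) : ℕ) : ℝ) + ((k : ℝ) + 1) ≤ n := by linarith
    exact_mod_cast this
  have hMn : Tendsto (fun n => ((n - (u n + u n / (r - 2)) : ℕ) : ℝ) / (n : ℝ)) atTop
      (nhds 1) := by
    have h := hUTn.const_sub 1
    rw [sub_zero] at h
    refine h.congr' ?_
    filter_upwards [hsmall, hnpos] with n h1 h2
    rw [Nat.cast_sub (by omega), sub_div, div_self h2.ne']
  have hnn : Tendsto (fun n : ℕ => (n : ℝ) / (n : ℝ)) atTop (nhds 1) := by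
    refine tendsto_const_nhds.congr' ?_
    filter_upwards [hnpos] with n h2
    rw [div_self h2.ne']
  have l1 := choose_tendsto _ _ _ hnat hMn (k - r + 2)
  have l2 := choose_tendsto _ _ _ hu1 hUT (r - 2)
  have l3 := (choose_tendsto _ _ _ hnat hnn k).inv₀
    (by
      have : (0 : ℝ) < k.factorial := by exact_mod_cast Nat.factorial_pos k
      positivity)
  have l4 := ((l1.mul l2).mul l3).const_mul μ
  have hlim : μ * (1 ^ (k - r + 2) / ((k - r + 2).factorial : ℝ) *
      ((1 + 1 / ((r - 2 : ℕ) : ℝ)) ^ (r - 2) / ((r - 2).factorial : ℝ)) *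
      (1 ^ k / (k.factorial : ℝ))⁻¹) = μ * K := by
    have hch : (k.choose (r - 2) : ℝ) * ((r - 2).factorial : ℝ) * ((k - r + 2).factorial : ℝ)
        = (k.factorial : ℝ) := by
      have := Nat.choose_mul_factorial_mul_factorial (by omega : r - 2 ≤ k)
      rw [show k - (r - 2) = k - r + 2 by omega] at this
      exact_mod_cast this
    have f1 : ((r - 2).factorial : ℝ) ≠ 0 := by exact_mod_cast Nat.factorial_ne_zero _
    have f2 : ((k - r + 2).factorial : ℝ) ≠ 0 := by exact_mod_cast Nat.factorial_ne_zero _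
    rw [hK, one_pow, one_pow, one_div (k.factorial : ℝ), inv_inv, ← hch]
    generalize (1 + 1 / ((r - 2 : ℕ) : ℝ)) ^ (r - 2) = z
    field_simp
  rw [hlim] at l4
  filter_upwards [l4.eventually (lt_mem_nhds hc's), hsmall, hnpos, hupos] with n h1 h2 h3 h4
  have key := lowerE_le k r n (u n) (m n) (u n / (r - 2)) (n - (u n + u n / (r - 2))) hr hrk
    (by omega) (by omega) lam (c * n) hlpos.le
    (fun st : ℤ × (ℕ → ℕ) =>
            if (st.2 (k - r + 2) : ℝ) ≤ c * n then 1 else 0)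
    (by
      intro s
      rw [← Real.exp_nat_mul, ← Real.exp_add]
      split_ifs with h
      · apply Real.one_le_exp
        nlinarith
      · positivity)
  refine key.trans (Real.exp_le_exp.2 ?_)
  have ha : 0 ≤ 1 - Real.exp (-lam) := by
    have : 0 ≤ lam / (1 + lam) := by positivity
    linarith
  have hchn : (0 : ℝ) < (n.choose k : ℝ) := by exact_mod_cast Nat.choose_pos (by
    have := Nat.le_of_add_left_le h2
    omega)
  have hpm : c' * n ≤ ((n - (u n + u n / (r - 2))).choose (k - r + 2) : ℝ) *
      ((u n + u n / (r - 2)).choose (r - 2) : ℝ) / (n.choose k : ℝ) * m n := by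
    have hmle : μ * (n : ℝ) ^ (r - 1) / (u n : ℝ) ^ (r - 2) ≤ m n := by
      rw [hm]; exact Nat.le_ceil _
    refine le_trans ?_ (mul_le_mul_of_nonneg_left hmle (by positivity))
    refine (mul_le_mul_of_nonneg_right h1.le h3.le).trans (le_of_eq ?_)
    have e1 : (n : ℝ) ^ k = (n : ℝ) ^ (k - r + 2) * (n : ℝ) ^ (r - 2) := by
      rw [← pow_add]; congr 1; omega
    have e2 : (n : ℝ) ^ (r - 1) = (n : ℝ) ^ (r - 2) * n := by
      rw [← pow_succ]; congr 1; omega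
    rw [e1, e2, inv_div]
    have n1 : (n : ℝ) ^ (k - r + 2) ≠ 0 := by positivity
    have n2 : (u n : ℝ) ^ (r - 2) ≠ 0 := by positivity
    generalize (n : ℝ) ^ (k - r + 2) = A at *
    generalize (n : ℝ) ^ (r - 2) = A' at *
    generalize (u n : ℝ) ^ (r - 2) = A'' at *
    field_simp
  have := mul_le_mul_of_nonneg_left hpm ha
  rw [← mul_assoc] at this
  nlinarith
end
end

section
/- Fix integers 3 ≤ r ≤ k ≤ n, u(n) < n, and consider the Markov chain for the upper bound. Define the moment generating function f̄_t(λ_{k−r+1}, λ_{k−r+2}, …, λ_k) := E[ exp( λ_{k−r+1}·(Ē(t)+t)/(k−r+1) + Σ_{j=k−r+2}^{k} λ_j·C̄_j(t) ) ]. Then for every t with 0 ≤ t < N(0) and N(t) ≥ k, the exact recursion f̄_{t+1}(λ_{k−r+1}, λ_{k−r+2}, …, λ_k) = f̄_t(λ_{k−r+1}, λ'_{k−r+2}, …, λ'_k) holds, where λ'_j := λ_j + log( 1 − j/N(t) + (j/N(t))·e^{λ_{j−1}} ) for j = k−r+2, …, k. -/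
open Filter Finset Asymptotics

noncomputable section

theorem upperIter_succ_last (k r n u : ℕ) (t : ℕ) : ∀ (s : ℕ) (g : ℤ × (ℕ → ℕ) → ℝ),
    upperIter k r n u s (t + 1) g = upperIter k r n u s t (upperStep k r n u (s + t) g) := by
  induction t with
  | zero => intro s g; rfl
  | succ t ih =>
    intro s g
    rw [upperIter, ih (s + 1) g]
    conv_rhs => rw [upperIter]
    rw [show s + 1 + t = s + (t + 1) by omega]

theorem binomPMF_mgf (c : ℕ) (p x : ℝ) :
    ∑ i ∈ Finset.range (c + 1), binomPMF c p i * x ^ i = (1 - p + p * x) ^ c := by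
  rw [add_comm (1 - p), add_pow]
  refine Finset.sum_congr rfl fun i _ => ?_
  rw [binomPMF, mul_pow]; ring

theorem tsum_pi_prod {l : ℕ} (c : Fin l → ℕ) (F : Fin l → ℕ → ℝ)
    (hF : ∀ i j, c i < j → F i j = 0) :
    ∑' R : Fin l → ℕ, ∏ i, F i (R i) = ∏ i, ∑ j ∈ Finset.range (c i + 1), F i j := by
  rw [Finset.prod_univ_sum]
  refine tsum_eq_sum fun R hR => ?_
  simp only [Fintype.mem_piFinset, Finset.mem_range, not_forall] at hR
  obtain ⟨i, hi⟩ := hR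
  exact Finset.prod_eq_zero (Finset.mem_univ i) (hF i _ (by omega))

theorem shift_sum (d q : ℕ) (lam : ℕ → ℝ) (C : ℕ → ℕ) (R : Fin (q + 1) → ℕ)
    (Re : ℕ → ℕ) (hRe : ∀ i : Fin (q + 1), Re (d + 2 + i) = R i) :
    lam (d + 1) * (Re (d + 2) : ℝ) +
      ∑ j ∈ Finset.Icc (d + 2) (d + (q + 2)),
        lam j * ((if d + 2 ≤ j ∧ j < d + (q + 2) then C j + Re (j + 1) else C j : ℕ) : ℝ)
    = ∑ j ∈ Finset.Icc (d + 2) (d + (q + 2)), lam j * (C j : ℝ)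
      + ∑ i : Fin (q + 1), lam (d + 1 + i) * (R i : ℝ) := by
  have hI : Finset.Icc (d + 2) (d + (q + 2)) = Finset.Ico (d + 2) (d + 2 + (q + 1)) := by
    ext x; simp only [Finset.mem_Icc, Finset.mem_Ico]; omega
  rw [hI, Finset.sum_Ico_eq_sum_range, Finset.sum_Ico_eq_sum_range]
  simp only [Nat.add_sub_cancel_left]
  have h1 : ∑ i : Fin (q + 1), lam (d + 1 + i) * (R i : ℝ)
      = ∑ i ∈ Finset.range (q + 1), lam (d + 1 + i) * (Re (d + 2 + i) : ℝ) := by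
    rw [← Fin.sum_univ_eq_sum_range (fun i => lam (d + 1 + i) * (Re (d + 2 + i) : ℝ))]
    exact Finset.sum_congr rfl fun i _ => by rw [hRe]
  rw [Finset.sum_range_succ' _ q] at h1
  rw [h1, Finset.sum_range_succ _ q, Finset.sum_range_succ _ q]
  rw [if_neg (by omega)]
  have h2 : ∀ i ∈ Finset.range q, lam (d + 2 + i) * ((if d + 2 ≤ d + 2 + i ∧ d + 2 + i < d + (q + 2)
        then C (d + 2 + i) + Re (d + 2 + i + 1) else C (d + 2 + i) : ℕ) : ℝ)
      = lam (d + 2 + i) * (C (d + 2 + i) : ℝ)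
        + lam (d + 1 + (i + 1)) * (Re (d + 2 + (i + 1)) : ℝ) := by
    intro i hi
    have := Finset.mem_range.1 hi
    rw [if_pos (by omega), show d + 1 + (i + 1) = d + 2 + i by omega,
      show d + 2 + (i + 1) = d + 2 + i + 1 by omega]
    push_cast; ring
  rw [Finset.sum_congr rfl h2, Finset.sum_add_distrib]
  simp only [add_zero]
  ring

theorem step_mgf (d q n u t : ℕ) (N : ℝ) (hN : N = (n : ℝ) - u - t)
    (hkN : ((d + (q + 2) : ℕ) : ℝ) ≤ N) (lam lam' : ℕ → ℝ)
    (h1 : lam' (d + 1) = lam (d + 1))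
    (h2 : ∀ j, d + 2 ≤ j → j ≤ d + (q + 2) → lam' j = lam j +
      Real.log (1 - (j : ℝ) / N + (j : ℝ) / N * Real.exp (lam (j - 1))))
    (a : ℝ) (ha : a = (d : ℝ) + 1) (s : ℤ × (ℕ → ℕ)) :
    upperStep (d + (q + 2)) (q + 2) n u t (fun st =>
      Real.exp (lam (d + 1) * ((st.1 : ℝ) + ((t + 1 : ℕ) : ℝ)) / a
        + ∑ j ∈ Finset.Icc (d + 2) (d + (q + 2)), lam j * (st.2 j : ℝ))) s
    = Real.exp (lam' (d + 1) * ((s.1 : ℝ) + (t : ℝ)) / a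
        + ∑ j ∈ Finset.Icc (d + 2) (d + (q + 2)), lam' j * (s.2 j : ℝ)) := by
  have hd : d + (q + 2) - (q + 2) = d := by omega
  have hNpos : 0 < N := lt_of_lt_of_le (by positivity) hkN
  have ha0 : a ≠ 0 := by rw [ha]; positivity
  unfold upperStep
  rw [hd, ← hN]
  set A := Real.exp (lam (d + 1) * ((s.1 : ℝ) + (t : ℝ)) / a
        + ∑ j ∈ Finset.Icc (d + 2) (d + (q + 2)), lam j * (s.2 j : ℝ)) with hA
  have key : ∀ R : Fin (q + 2 - 1) → ℕ,
      Real.exp (lam (d + 1) * (((s.1 - 1 + ((d + 1 : ℕ) : ℤ) *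
          (Rext (d + (q + 2)) (q + 2) R (d + 2) : ℤ) : ℤ) : ℝ) + ((t + 1 : ℕ) : ℝ)) / a
        + ∑ j ∈ Finset.Icc (d + 2) (d + (q + 2)), lam j *
          ((if d + 2 ≤ j ∧ j < d + (q + 2) then
            s.2 j + Rext (d + (q + 2)) (q + 2) R (j + 1) else s.2 j : ℕ) : ℝ))
      = A * ∏ i : Fin (q + 2 - 1), Real.exp (lam (d + 1 + i)) ^ R i := by
    intro R
    have hs := shift_sum d q lam s.2 R (Rext (d + (q + 2)) (q + 2) R) (by
      intro i
      have := i.2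
      unfold Rext
      rw [dif_pos (by omega)]
      congr 1
      ext
      simp only
      omega)
    have hp : ∏ i : Fin (q + 2 - 1), Real.exp (lam (d + 1 + i)) ^ R i
        = Real.exp (∑ i : Fin (q + 1), lam (d + 1 + i) * (R i : ℝ)) := by
      rw [Real.exp_sum]
      refine Finset.prod_congr rfl fun i _ => ?_
      rw [← Real.exp_nat_mul, mul_comm]
    rw [hp, hA, ← Real.exp_add]
    congr 1
    have assoc3 : ∀ x y z w : ℝ, x = y + z → x + w = y + (z + w) := by
      intro x y z w h
      rw [h]; ring
    rw [add_assoc, ← hs]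
    refine assoc3 _ _ _ _ ?_
    push_cast
    rw [← ha]
    field_simp
    ring
  have e1 : ∀ R : Fin (q + 2 - 1) → ℕ,
      (∏ i : Fin (q + 2 - 1), binomPMF (s.2 (d + 2 + (i : ℕ)))
        (((d + 2 + (i : ℕ) : ℕ) : ℝ) / N) (R i)) *
      Real.exp (lam (d + 1) * (((s.1 - 1 + ((d + 1 : ℕ) : ℤ) *
          (Rext (d + (q + 2)) (q + 2) R (d + 2) : ℤ) : ℤ) : ℝ) + ((t + 1 : ℕ) : ℝ)) / a
        + ∑ j ∈ Finset.Icc (d + 2) (d + (q + 2)), lam j *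
          ((if d + 2 ≤ j ∧ j < d + (q + 2) then
            s.2 j + Rext (d + (q + 2)) (q + 2) R (j + 1) else s.2 j : ℕ) : ℝ))
      = A * ∏ i : Fin (q + 2 - 1), (binomPMF (s.2 (d + 2 + (i : ℕ)))
        (((d + 2 + (i : ℕ) : ℕ) : ℝ) / N) (R i) * Real.exp (lam (d + 1 + i)) ^ R i) := by
    intro R
    rw [key R, Finset.prod_mul_distrib]; ring
  rw [tsum_congr e1, tsum_mul_left,
    tsum_pi_prod (fun i => s.2 (d + 2 + (i : ℕ))) (fun i x => binomPMF (s.2 (d + 2 + (i : ℕ)))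
        (((d + 2 + (i : ℕ) : ℕ) : ℝ) / N) x * Real.exp (lam (d + 1 + i)) ^ x)
      (by intro i j hij; simp [binomPMF, Nat.choose_eq_zero_of_lt hij])]
  simp only [binomPMF_mgf]
  have hI : Finset.Icc (d + 2) (d + (q + 2)) = Finset.Ico (d + 2) (d + 2 + (q + 1)) := by
    ext x; simp only [Finset.mem_Icc, Finset.mem_Ico]; omega
  have hsum : ∑ j ∈ Finset.Icc (d + 2) (d + (q + 2)), lam' j * (s.2 j : ℝ)
      = ∑ j ∈ Finset.Icc (d + 2) (d + (q + 2)), lam j * (s.2 j : ℝ)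
        + ∑ i : Fin (q + 1), (s.2 (d + 2 + i) : ℝ) * Real.log (1 - ((d + 2 + i : ℕ) : ℝ) / N
          + ((d + 2 + i : ℕ) : ℝ) / N * Real.exp (lam (d + 1 + i))) := by
    rw [hI, Finset.sum_Ico_eq_sum_range, Finset.sum_Ico_eq_sum_range,
      Fin.sum_univ_eq_sum_range (fun i => (s.2 (d + 2 + i) : ℝ) *
        Real.log (1 - ((d + 2 + i : ℕ) : ℝ) / N
          + ((d + 2 + i : ℕ) : ℝ) / N * Real.exp (lam (d + 1 + i))))]
    simp only [Nat.add_sub_cancel_left]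
    rw [← Finset.sum_add_distrib]
    refine Finset.sum_congr rfl fun i hi => ?_
    have := Finset.mem_range.1 hi
    rw [h2 _ (by omega) (by omega), show d + 2 + i - 1 = d + 1 + i by omega]
    ring
  rw [hsum, h1, ← add_assoc, Real.exp_add, ← hA, Real.exp_sum]
  congr 1
  refine Finset.prod_congr rfl fun i _ => ?_
  have hi : (i : ℕ) < q + 1 := i.2
  have hple : ((d + 2 + i : ℕ) : ℝ) / N ≤ 1 := by
    rw [div_le_one hNpos]
    refine le_trans ?_ hkN
    exact_mod_cast (by omega : d + 2 + (i : ℕ) ≤ d + (q + 2))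
  have hp0 : 0 < ((d + 2 + i : ℕ) : ℝ) / N := div_pos (by positivity) hNpos
  have hpos : 0 < 1 - ((d + 2 + i : ℕ) : ℝ) / N
          + ((d + 2 + i : ℕ) : ℝ) / N * Real.exp (lam (d + 1 + i)) := by
    have := mul_pos hp0 (Real.exp_pos (lam (d + 1 + i)))
    linarith
  rw [Real.exp_nat_mul, Real.exp_log hpos]

/-- exact one-step recursion for the moment generating function
`f̄_t(λ_{k-r+1},…,λ_k) = E[exp(λ_{k-r+1}(Ē(t)+t)/(k-r+1) + ∑_{j=k-r+2}^k λ_j C̄_j(t))]`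
of the upper-bound Markov chain:
`f̄_{t+1}(λ) = f̄_t(λ')` with `λ'_j = λ_j + log(1 - j/N(t) + (j/N(t)) e^{λ_{j-1}})`. -/
theorem stmt16 (k r n u m t : ℕ) (hr : 3 ≤ r) (hrk : r ≤ k) (hun : u < n)
    (ht : t < n - u) (hNt : k ≤ n - u - t)
    (lam : ℕ → ℝ) :
    let g : (ℕ → ℝ) → ℕ → ℤ × (ℕ → ℕ) → ℝ := fun lv tt st =>
      Real.exp (lv (k - r + 1) * ((st.1 : ℝ) + (tt : ℝ)) / ((k : ℝ) - r + 1)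
        + ∑ j ∈ Finset.Icc (k - r + 2) k, lv j * (st.2 j : ℝ))
    let lam' : ℕ → ℝ := fun j =>
      if k - r + 2 ≤ j ∧ j ≤ k then
        lam j + Real.log (1 - (j : ℝ) / ((n : ℝ) - u - t)
          + (j : ℝ) / ((n : ℝ) - u - t) * Real.exp (lam (j - 1)))
      else lam j
    upperE k r n u m (t + 1) (g lam (t + 1)) = upperE k r n u m t (g lam' t) := by
  intro g lam'
  obtain ⟨q, rfl⟩ : ∃ q, r = q + 2 := ⟨r - 2, by omega⟩
  obtain ⟨d, rfl⟩ : ∃ d, k = d + (q + 2) := ⟨k - (q + 2), by omega⟩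
  have hd : d + (q + 2) - (q + 2) = d := by omega
  unfold upperE
  congr 1
  refine Finset.sum_congr rfl fun ω _ => ?_
  rw [upperIter_succ_last, Nat.zero_add]
  congr 1
  funext s
  have hN : ((d + (q + 2) : ℕ) : ℝ) ≤ (n : ℝ) - u - t := by
    have h : d + (q + 2) + u + t ≤ n := by omega
    have h' : ((d + (q + 2) : ℕ) : ℝ) + u + t ≤ n := by exact_mod_cast h
    linarith
  have := step_mgf d q n u t _ rfl hN lam lam'
    (by simp only [lam']; rw [if_neg (by omega)])
    (by intro j hj hj'; simp only [lam']; rw [if_pos (by omega)])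
    (((d + (q + 2) : ℕ) : ℝ) - ((q + 2 : ℕ) : ℝ) + 1) (by push_cast; ring) s
  simp only [g, hd]
  exact this
end
end
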